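/- For every integer k ≥ 3 there exist a real β > 0 and a positive integer s₀ such that the following holds. Let n, s be integers with s > s₀ and ks + k ≤ n ≤ (1+β)ks + k − 2. If F ⊆ binom([n],k) satisfies ν(F) ≤ s and |F| > max{|E₀(n,k,s)|, |E₁(n,k,s)|}, then there exists a set W ⊆ [n] with |W| = ks + k − 1 such that every member of F is contained in W (i.e., up to relabeling of vertices, F is a subfamily of the family of all k-subsets of [ks+k−1]). -/

import Mathlib

/-- The `(x,y)`-shift of a single edge `A` with respect to the family `F`. -/
def shiftEdge (x y : ℕ) (F : Finset (Finset ℕ)) (A : Finset ℕ) : Finset ℕ :=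
  if y ∈ A ∧ x ∉ A ∧ insert x (A.erase y) ∉ F then insert x (A.erase y) else A

/-- The `(x,y)`-shift of a family `F`. -/
def shiftFam (x y : ℕ) (F : Finset (Finset ℕ)) : Finset (Finset ℕ) :=
  F.image (shiftEdge x y F)

/-- The matching number: the largest size of a pairwise-disjoint subfamily. -/
noncomputable def matchingNumber (F : Finset (Finset ℕ)) : ℕ :=
  sSup {m | ∃ M ⊆ F, M.card = m ∧ (M : Set (Finset ℕ)).PairwiseDisjoint id}

/-- `F` is non-trivial on `[n]`: no vertex of `[n] = {1,…,n}` is isolated. -/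
def NonTrivial (n : ℕ) (F : Finset (Finset ℕ)) : Prop :=
  ∀ v ∈ Finset.Icc 1 n, ∃ A ∈ F, v ∈ A

/-- `F` is shifted on `Y`: all `(x,y)`-shifts with `x < y` in `Y` fix `F`. -/
def ShiftedOn (Y : Finset ℕ) (F : Finset (Finset ℕ)) : Prop :=
  ∀ x ∈ Y, ∀ y ∈ Y, x < y → shiftFam x y F = F

/-- The clique number of the `k`-graph `F` on `[n]`. -/
noncomputable def cliqueNum (n k : ℕ) (F : Finset (Finset ℕ)) : ℕ :=
  sSup {m | ∃ U ⊆ Finset.Icc 1 n, U.card = m ∧ Finset.powersetCard k U ⊆ F}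

/-- The vertex-cover number of the `k`-graph `F` on `[n]`. -/
noncomputable def coverNum (n : ℕ) (F : Finset (Finset ℕ)) : ℕ :=
  sInf {t | ∃ T ⊆ Finset.Icc 1 n, T.card = t ∧ ∀ A ∈ F, (A ∩ T).Nonempty}

/-- The link `N_F(x)`. -/
def nbr (F : Finset (Finset ℕ)) (x : ℕ) : Finset (Finset ℕ) :=
  (F.filter fun A => x ∈ A).image fun A => A.erase x

/-- The link `N_F(x,y)`. -/
def nbr2 (F : Finset (Finset ℕ)) (x y : ℕ) : Finset (Finset ℕ) :=
  (F.filter fun A => x ∈ A ∧ y ∈ A).image fun A => (A.erase x).erase y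

/-- The link `N_F(x, ȳ)`. -/
def nbrBar (F : Finset (Finset ℕ)) (x y : ℕ) : Finset (Finset ℕ) :=
  (F.filter fun A => x ∈ A ∧ y ∉ A).image fun A => A.erase x

/-- The extremal family `E₀(n,k,s)`. -/
def E0 (n k s : ℕ) : Finset (Finset ℕ) :=
  Finset.powersetCard k (Finset.Icc 1 (k * s + k - 2)) ∪
  ((Finset.powersetCard k (Finset.Icc 1 n)).filter
    (fun A => A \ Finset.Icc 1 (k * s + k - 2) = {k * s + k - 1} ∧
      (A ∩ Finset.Icc 1 (k - 1)).Nonempty)) ∪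
  ((Finset.Icc (k * s + k) n).image (fun x => insert x (Finset.Icc 1 (k - 1))))

open Classical in
/-- The extremal family `E₁(n,k,s)`. -/
noncomputable def E1 (n k s : ℕ) : Finset (Finset ℕ) :=
  Finset.powersetCard k (Finset.Icc 1 (k * s + k - 2)) ∪
  ((Finset.powersetCard k (Finset.Icc 1 n)).filter
    (fun A => 1 ∈ A ∧ ∃ x ∈ Finset.Icc (k * s + k - 1) n,
      A \ Finset.Icc 1 (k * s + k - 2) = {x}))

/-- `F` is `s`-saturated on `[n]`. -/
def Saturated (n k s : ℕ) (F : Finset (Finset ℕ)) : Prop :=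
  matchingNumber F ≤ s ∧
  ∀ G ∈ Finset.powersetCard k (Finset.Icc 1 n), G ∉ F →
    matchingNumber (insert G F) = s + 1

/-!
Let `B` be the set of vertices of low degree. Since `F` is only slightly smaller than the complete
`k`-graph, few vertices are deficient, i.e. miss many edges. A matching `M` of edges meeting `B` can
be extended greedily to cover all deficient vertices outside `B` without using further vertices of
`B`, and then, on the remaining almost complete `k`-graph, by a matching leaving fewer than `k`
vertices uncovered: otherwise a maximum matching could be enlarged by trading `k - 1` of its edges,
together with `k` uncovered vertices, for the `k` colour classes of these `k` sets.
Comparing with `ν(F) ≤ s` shows that `M` covers at most `c` vertices of `B`, where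
`|V| + c = |B| + ks + k - 1`.

If `c = 0`, no edge meets `B` and `W = V \ B` works. If `c ≥ 2`, too few edges meet `B`. If `c = 1`,
edges meeting `B` have one vertex in `B` and pairwise intersect, so the links of distinct vertices
of `B` are cross-intersecting; either all but one of them are empty, which gives `W`, or `|F|` is at
most the size of `E₀` or `E₁`.
-/

open Finset

section Choose

theorem choose_succ_add_mul_choose_le (n r j : ℕ) :
    n.choose (r + 1) + j * n.choose r ≤ (n + j).choose (r + 1) := by
  induction j with
  | zero => simp
  | succ j ih =>
    have hmono : n.choose r ≤ (n + j).choose r := Nat.choose_le_choose r (Nat.le_add_right n j)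
    rw [← add_assoc, Nat.choose_succ_succ', add_mul, one_mul]
    omega

theorem choose_succ_le_add_mul_choose (n r j : ℕ) :
    (n + j).choose (r + 1) ≤ n.choose (r + 1) + j * (n + j - 1).choose r := by
  induction j with
  | zero => simp
  | succ j ih =>
    have hmono : j * (n + j - 1).choose r ≤ j * (n + j).choose r :=
      Nat.mul_le_mul_left j (Nat.choose_le_choose r (Nat.sub_le _ 1))
    rw [← add_assoc, Nat.choose_succ_succ', Nat.add_sub_cancel, add_mul, one_mul]
    omega

theorem mul_choose_sub_two_le {c n k : ℕ} (hk : 2 ≤ k) (hc : c * (k - 1) ≤ n - 1) :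
    c * (n - 2).choose (k - 2) ≤ (n - 1).choose (k - 1) := by
  obtain ⟨k, rfl⟩ := Nat.exists_eq_add_of_le' hk
  obtain hn | hn := Nat.lt_or_ge n 2
  · have hc0 : c = 0 := by
      simpa using show c * (k + 1) = 0 from Nat.le_zero.1 (hc.trans (by omega))
    simp [hc0]
  obtain ⟨n, rfl⟩ := Nat.exists_eq_add_of_le' hn
  simp only [Nat.add_sub_cancel, Nat.add_succ_sub_one] at hc ⊢
  refine Nat.le_of_mul_le_mul_right ?_ k.succ_pos
  calc c * n.choose k * (k + 1) = c * (k + 1) * n.choose k := by ring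
    _ ≤ (n + 1) * n.choose k := Nat.mul_le_mul_right _ hc
    _ = (n + 1).choose (k + 1) * (k + 1) := Nat.add_one_mul_choose_eq n k

theorem choose_le_pow_mul_choose {n q c r : ℕ} (h : n ≤ c * (q + 1 - r)) :
    n.choose r ≤ c ^ r * q.choose r := by
  refine Nat.le_of_mul_le_mul_left ?_ r.factorial_pos
  calc r.factorial * n.choose r = n.descFactorial r :=
        (Nat.descFactorial_eq_factorial_mul_choose n r).symm
    _ ≤ n ^ r := Nat.descFactorial_le_pow n r
    _ ≤ (c * (q + 1 - r)) ^ r := Nat.pow_le_pow_left h r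
    _ = c ^ r * (q + 1 - r) ^ r := mul_pow ..
    _ ≤ c ^ r * q.descFactorial r := Nat.mul_le_mul_left _ (Nat.pow_sub_le_descFactorial q r)
    _ = r.factorial * (c ^ r * q.choose r) := by
        rw [Nat.descFactorial_eq_factorial_mul_choose]; ring

end Choose

section Degree

variable {α : Type*} [DecidableEq α] {V X Y : Finset α} {F P : Finset (Finset α)} {k D : ℕ} {v : α}

/-- The number of members of the family `F` containing `v`. Applied to `powersetCard k V \ F` it
counts the `k`-subsets of `V` at `v` that are missing from `F`. -/
def degree (F : Finset (Finset α)) (v : α) : ℕ :=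
  #{A ∈ F | v ∈ A}

theorem degree_mono (h : F ⊆ P) (v : α) : degree F v ≤ degree P v :=
  card_le_card (filter_subset_filter _ h)

theorem card_memberSubfamily (F : Finset (Finset α)) (v : α) :
    #(F.memberSubfamily v) = degree F v :=
  card_image_of_injOn ((erase_injOn' v).mono fun _ hA ↦ (mem_filter.1 hA).2)

theorem card_filter_subset_powersetCard_le (T V : Finset α) (k : ℕ) :
    #{A ∈ powersetCard k V | T ⊆ A} ≤ (#V - #T).choose (k - #T) := by
  by_cases hT : T ⊆ V ∧ #T ≤ k
  · exact (card_filter_powersetCard_subset T V k hT.1 hT.2).le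
  · rw [filter_eq_empty_iff.2, card_empty]
    · exact Nat.zero_le _
    · intro A hA hTA
      obtain ⟨hAV, rfl⟩ := mem_powersetCard.1 hA
      exact hT ⟨hTA.trans hAV, card_le_card hTA⟩

theorem degree_powersetCard (hk : k ≠ 0) (hv : v ∈ V) :
    degree (powersetCard k V) v = (#V - 1).choose (k - 1) := by
  simpa [degree] using card_filter_powersetCard_subset {v} V k (by simpa using hv)
    (by simpa using Nat.one_le_iff_ne_zero.2 hk)

theorem degree_le_choose (hF : F ⊆ powersetCard k V) (v : α) :
    degree F v ≤ (#V - 1).choose (k - 1) :=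
  (degree_mono hF v).trans (by simpa [degree] using card_filter_subset_powersetCard_le {v} V k)

theorem degree_add_degree_sdiff (hk : k ≠ 0) (hF : F ⊆ powersetCard k V) (hv : v ∈ V) :
    degree F v + degree (powersetCard k V \ F) v = (#V - 1).choose (k - 1) := by
  rw [← degree_powersetCard hk hv]
  simp only [degree]
  rw [← card_union_of_disjoint (disjoint_filter_filter disjoint_sdiff), ← filter_union,
    union_sdiff_of_subset hF]

theorem card_filter_not_disjoint_powersetCard (k : ℕ) (hX : X ⊆ V) :
    #{A ∈ powersetCard k V | ¬Disjoint A X} = (#V).choose k - (#V - #X).choose k := by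
  have hdisjoint : {A ∈ powersetCard k V | Disjoint A X} = powersetCard k (V \ X) := by
    ext A
    simp only [mem_filter, mem_powersetCard, subset_sdiff]
    tauto
  rw [filter_not, card_sdiff_of_subset (filter_subset _ _), hdisjoint, card_powersetCard,
    card_powersetCard, card_sdiff_of_subset hX]

theorem card_le_choose_sdiff_add (hF : F ⊆ powersetCard k V) (X : Finset α) :
    #F ≤ (#(V \ X)).choose k + #{A ∈ F | ¬Disjoint A X} := by
  rw [← card_filter_add_card_filter_not (s := F) (fun A ↦ Disjoint A X), ← card_powersetCard]
  gcongr
  intro A hA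
  obtain ⟨hAF, hAX⟩ := mem_filter.1 hA
  obtain ⟨hAV, hAk⟩ := mem_powersetCard.1 (hF hAF)
  exact mem_powersetCard.2 ⟨subset_sdiff.2 ⟨hAV, hAX⟩, hAk⟩

theorem card_le_sum_degree (hX : ∀ A ∈ F, ¬Disjoint A X) : #F ≤ ∑ v ∈ X, degree F v := by
  refine le_trans (card_le_card fun A hA ↦ ?_) card_biUnion_le
  obtain ⟨v, hvA, hvX⟩ := not_disjoint_iff.1 (hX A hA)
  exact mem_biUnion.2 ⟨v, hvX, mem_filter.2 ⟨hA, hvA⟩⟩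

theorem degree_le_card_mul_choose (hF : F ⊆ powersetCard k V) (hv : v ∉ Y)
    (hY : ∀ A ∈ F, v ∈ A → ¬Disjoint A Y) :
    degree F v ≤ #Y * (#V - 2).choose (k - 2) := by
  have hcover : {A ∈ F | v ∈ A} ⊆
      Y.biUnion fun y ↦ {A ∈ powersetCard k V | {v, y} ⊆ A} := by
    intro A hA
    obtain ⟨hAF, hvA⟩ := mem_filter.1 hA
    obtain ⟨y, hyA, hyY⟩ := not_disjoint_iff.1 (hY A hAF hvA)
    exact mem_biUnion.2 ⟨y, hyY, mem_filter.2 ⟨hF hAF, by simp [insert_subset_iff, hvA, hyA]⟩⟩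
  refine (card_le_card hcover).trans (card_biUnion_le_card_mul _ _ _ fun y hy ↦ ?_)
  have hpair := card_filter_subset_powersetCard_le {v, y} V k
  have hvy : v ≠ y := fun h ↦ hv (h ▸ hy)
  rwa [card_pair hvy] at hpair

theorem card_le_of_not_disjoint (hF : F ⊆ powersetCard k V) (hX : ∀ A ∈ F, ¬Disjoint A X)
    (hY : ∀ A ∈ F, ¬Disjoint A Y) (hD : ∀ v ∈ X ∩ Y, degree F v ≤ D) :
    #F ≤ #(X ∩ Y) * D + #(X \ Y) * (#Y * (#V - 2).choose (k - 2)) := by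
  calc #F ≤ ∑ v ∈ X, degree F v := card_le_sum_degree hX
    _ = ∑ v ∈ X ∩ Y, degree F v + ∑ v ∈ X \ Y, degree F v := (sum_inter_add_sum_sdiff ..).symm
    _ ≤ _ := add_le_add (sum_le_card_nsmul _ _ _ hD) (sum_le_card_nsmul _ _ _ fun v hv ↦
        degree_le_card_mul_choose hF (mem_sdiff.1 hv).2 fun A hA _ ↦ hY A hA)

theorem card_mul_le_mul_card_of_lt_degree (hF : ∀ A ∈ F, #A = k) (hD : ∀ v ∈ X, D < degree F v) :
    #X * (D + 1) ≤ k * #F :=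
  calc #X * (D + 1) ≤ ∑ A ∈ F, #(X ∩ A) := le_sum_card_inter hD
    _ ≤ #F * k := sum_le_card_nsmul _ _ _ fun A hA ↦
        (card_le_card inter_subset_right).trans (hF A hA).le
    _ = k * #F := mul_comm ..

end Degree

section Matching

variable {α : Type*} {F M N S : Finset (Finset α)} {A B X : Finset α} {k : ℕ}

/-- `M` is a matching of the family `F`: a subfamily of pairwise disjoint members. -/
structure IsMatching (F M : Finset (Finset α)) : Prop where
  subset : M ⊆ F
  pairwiseDisjoint : (M : Set (Finset α)).PairwiseDisjoint id

/-- `M` is a matching of `F` of largest possible size. -/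
structure IsMaxMatching (F M : Finset (Finset α)) : Prop extends IsMatching F M where
  card_le : ∀ N, IsMatching F N → #N ≤ #M

namespace IsMatching

protected theorem empty (F : Finset (Finset α)) : IsMatching F ∅ :=
  ⟨empty_subset F, by simp⟩

protected theorem singleton (hA : A ∈ F) : IsMatching F {A} :=
  ⟨singleton_subset_iff.2 hA, by simp⟩

theorem mono (hM : IsMatching F M) (h : F ⊆ N) : IsMatching N M :=
  ⟨hM.subset.trans h, hM.pairwiseDisjoint⟩

end IsMatching

theorem exists_isMaxMatching (F : Finset (Finset α)) : ∃ M, IsMaxMatching F M := by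
  classical
  obtain ⟨M, hM, hmax⟩ := exists_max_image {M ∈ F.powerset | IsMatching F M} card
    ⟨∅, mem_filter.2 ⟨empty_mem_powerset F, .empty F⟩⟩
  exact ⟨M, (mem_filter.1 hM).2,
    fun N hN ↦ hmax N (mem_filter.2 ⟨mem_powerset.2 hN.subset, hN⟩)⟩

variable [DecidableEq α]

/-- The vertices covered by the members of `M`. -/
def verts (M : Finset (Finset α)) : Finset α :=
  M.biUnion id

theorem mem_verts {x : α} : x ∈ verts M ↔ ∃ A ∈ M, x ∈ A :=
  mem_biUnion

@[simp]
theorem verts_empty : verts (∅ : Finset (Finset α)) = ∅ :=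
  biUnion_empty

@[simp]
theorem verts_singleton (A : Finset α) : verts {A} = A :=
  singleton_biUnion

@[simp]
theorem verts_insert (A : Finset α) (M : Finset (Finset α)) : verts (insert A M) = A ∪ verts M :=
  biUnion_insert

theorem subset_verts (hA : A ∈ M) : A ⊆ verts M :=
  subset_biUnion_of_mem id hA

theorem verts_subset_iff : verts M ⊆ X ↔ ∀ A ∈ M, A ⊆ X :=
  biUnion_subset

theorem disjoint_of_disjoint_verts (hM : ∅ ∉ M) (h : Disjoint (verts M) (verts N)) :
    Disjoint M N := by
  refine disjoint_left.2 fun A hAM hAN ↦ hM ?_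
  rwa [← disjoint_self_iff_empty A |>.1 (h.mono (subset_verts hAM) (subset_verts hAN))]

namespace IsMatching

theorem pairwiseDisjoint_insert (hM : IsMatching F M) (h : Disjoint A (verts M)) :
    ((insert A M : Finset (Finset α)) : Set (Finset α)).PairwiseDisjoint id := by
  rw [coe_insert, Set.pairwiseDisjoint_insert]
  exact ⟨hM.pairwiseDisjoint, fun B hB _ ↦ h.mono_right (subset_verts hB)⟩

protected theorem union (hM : IsMatching F M) (hN : IsMatching F N)
    (h : Disjoint (verts M) (verts N)) : IsMatching F (M ∪ N) := by
  refine ⟨union_subset hM.subset hN.subset, ?_⟩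
  rw [coe_union, Set.pairwiseDisjoint_union]
  exact ⟨hM.pairwiseDisjoint, hN.pairwiseDisjoint,
    fun A hA B hB _ ↦ h.mono (subset_verts hA) (subset_verts hB)⟩

protected theorem insert (hM : IsMatching F M) (hA : A ∈ F) (h : Disjoint A (verts M)) :
    IsMatching F (insert A M) :=
  (IsMatching.singleton hA).union hM (by rwa [verts_singleton])

theorem card_verts (hM : IsMatching F M) (hF : ∀ A ∈ F, #A = k) : #(verts M) = k * #M := by
  rw [mul_comm]
  exact (card_biUnion hM.pairwiseDisjoint).trans (sum_const_nat fun A hA ↦ hF A (hM.subset hA))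

theorem card_le_card_verts_inter (hM : IsMatching {A ∈ F | ¬Disjoint A B} M) :
    #M ≤ #(verts M ∩ B) := by
  rw [verts, biUnion_inter]
  refine card_le_card_biUnion (fun A hA A' hA' hne ↦ ?_) fun A hA ↦ ?_
  · exact (hM.pairwiseDisjoint hA hA' hne).mono inter_subset_left inter_subset_left
  · exact not_disjoint_iff_nonempty_inter.1 (mem_filter.1 (hM.subset hA)).2

end IsMatching

namespace IsMaxMatching

theorem card_le_of_exchange (hM : IsMaxMatching F M) (hF : ∅ ∉ F) (hS : S ⊆ M)
    (hN : IsMatching F N) (h : Disjoint (verts N) (verts (M \ S))) : #N ≤ #S := by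
  have hMS : IsMatching F (M \ S) := ⟨sdiff_subset.trans hM.subset,
    hM.pairwiseDisjoint.subset (coe_subset.2 sdiff_subset)⟩
  have hle := hM.card_le _ (hN.union hMS h)
  rw [card_union_of_disjoint (disjoint_of_disjoint_verts (fun h0 ↦ hF (hN.subset h0)) h)] at hle
  have hcard := card_sdiff_add_card_eq_card hS
  omega

theorem not_disjoint_verts (hM : IsMaxMatching F M) (hF : ∅ ∉ F) (hA : A ∈ F) :
    ¬Disjoint A (verts M) := fun h ↦ by
  simpa using hM.card_le_of_exchange hF (empty_subset M) (.singleton hA) (by simpa using h)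

end IsMaxMatching

end Matching

section ColourClass

variable {α : Type*} {F M N S : Finset (Finset α)} {U V E : Finset α} {c : α → ℕ}
  {i j k D : ℕ}

theorem exists_colouring (hN : (N : Set (Finset α)).PairwiseDisjoint id)
    (hk : ∀ E ∈ N, #E = k) : ∃ c : α → ℕ, ∀ E ∈ N, ∀ i < k, #{x ∈ E | c x = i} = 1 := by
  classical
  induction N using Finset.induction_on with
  | empty => exact ⟨0, by simp⟩
  | insert E N hE ih =>
    rw [coe_insert, Set.pairwiseDisjoint_insert_of_notMem (mem_coe.not.2 hE)] at hN
    obtain ⟨c, hc⟩ := ih hN.1 fun E' hE' ↦ hk E' (mem_insert_of_mem hE')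
    have e := E.equivFinOfCardEq (hk E (mem_insert_self E N))
    refine ⟨fun x ↦ if hx : x ∈ E then e ⟨x, hx⟩ else c x, ?_⟩
    simp only [forall_mem_insert]
    refine ⟨fun i hi ↦ card_eq_one.2 ⟨e.symm ⟨i, hi⟩, ?_⟩, fun E' hE' i hi ↦ ?_⟩
    · ext x
      by_cases hx : x ∈ E
      · simp [hx, ← Fin.ext_iff (b := ⟨i, hi⟩), ← Equiv.eq_symm_apply, Subtype.ext_iff]
      · simpa [hx] using fun h : x = _ ↦ hx (h ▸ (e.symm ⟨i, hi⟩).2)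
    · rw [← hc E' hE' i hi]
      congr 1
      refine filter_congr fun x hx ↦ ?_
      rw [dif_neg (show x ∉ E from disjoint_right.1 (hN.2 E' hE') hx)]

variable [DecidableEq α]

/-- The vertices of colour `i` covered by `S`. If every member of `S` has exactly one vertex of
each colour, this is a transversal of `S`. -/
def colourClass (c : α → ℕ) (S : Finset (Finset α)) (i : ℕ) : Finset α :=
  {x ∈ verts S | c x = i}

theorem colourClass_subset_verts : colourClass c S i ⊆ verts S :=
  filter_subset _ _

theorem disjoint_colourClass (h : i ≠ j) : Disjoint (colourClass c S i) (colourClass c S j) :=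
  disjoint_filter.2 fun _ _ hi hj ↦ h (hi.symm.trans hj)

theorem card_colourClass (hS : (S : Set (Finset α)).PairwiseDisjoint id)
    (hc : ∀ E ∈ S, #{x ∈ E | c x = i} = 1) : #(colourClass c S i) = #S := by
  rw [colourClass, verts, filter_biUnion, card_biUnion]
  · exact (sum_const_nat hc).trans (mul_one _)
  · exact fun E hE E' hE' hne ↦ disjoint_filter_filter (hS hE hE' hne)

theorem not_disjoint_colourClass_iff (hN : (N : Set (Finset α)).PairwiseDisjoint id)
    (hc : ∀ E ∈ N, #{x ∈ E | c x = i} = 1) (hS : S ⊆ N) (hE : E ∈ N) :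
    ¬Disjoint E (colourClass c S i) ↔ E ∈ S := by
  constructor
  · intro h
    obtain ⟨x, hxE, hx⟩ := not_disjoint_iff.1 h
    obtain ⟨E', hE', hxE'⟩ := mem_verts.1 (colourClass_subset_verts hx)
    rwa [hN.elim_finset hE (hS hE') x hxE hxE']
  · intro hES
    obtain ⟨x, hx⟩ := card_pos.1 (hc E hE).symm.le
    rw [mem_filter] at hx
    exact not_disjoint_iff.2 ⟨x, hx.1, mem_filter.2 ⟨subset_verts hES hx.1, hx.2⟩⟩

theorem colourClass_injOn (hN : (N : Set (Finset α)).PairwiseDisjoint id)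
    (hc : ∀ E ∈ N, #{x ∈ E | c x = i} = 1) :
    Set.InjOn (fun S ↦ colourClass c S i) {S | S ⊆ N} := by
  intro S hS S' hS' (h : colourClass c S i = colourClass c S' i)
  ext E
  by_cases hE : E ∈ N
  · rw [← not_disjoint_colourClass_iff hN hc hS hE, h, not_disjoint_colourClass_iff hN hc hS' hE]
  · exact iff_of_false (fun h ↦ hE (hS h)) fun h ↦ hE (hS' h)

theorem isMatching_image_colourClass (hF : ∀ i < k, colourClass c S i ∈ F) :
    IsMatching F ((range k).image (colourClass c S)) := by
  refine ⟨image_subset_iff.2 fun i hi ↦ hF i (mem_range.1 hi), ?_⟩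
  rw [coe_image]
  rintro _ ⟨i, -, rfl⟩ _ ⟨j, -, rfl⟩ hne
  exact disjoint_colourClass fun h ↦ hne (h ▸ rfl)

theorem card_image_colourClass (hne : ∀ i < k, (colourClass c S i).Nonempty) :
    #((range k).image (colourClass c S)) = k := by
  rw [card_image_of_injOn, card_range]
  intro i hi j _ (h : colourClass c S i = colourClass c S j)
  by_contra hij
  have hself : Disjoint (colourClass c S i) (colourClass c S i) := by
    conv_rhs => rw [h]
    exact disjoint_colourClass hij
  exact (hne i (mem_range.1 hi)).ne_empty (disjoint_self_iff_empty _ |>.1 hself)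

namespace IsMaxMatching

-- Otherwise trading `S` for the `k` colour classes of `insert U S` would enlarge `M`.
theorem exists_colourClass_notMem (hM : IsMaxMatching F M) (hF : ∅ ∉ F)
    (hUM : Disjoint U (verts M)) (hS : S ⊆ M) (hSk : #S < k) :
    ∃ i < k, colourClass c (insert U S) i ∉ F := by
  by_contra! hall
  have hdisj : Disjoint (verts ((range k).image (colourClass c (insert U S)))) (verts (M \ S)) := by
    have hSM : Disjoint (verts S) (verts (M \ S)) := by
      refine (disjoint_biUnion_left ..).2 fun E hE ↦ (disjoint_biUnion_right ..).2 fun E' hE' ↦ ?_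
      rw [mem_sdiff] at hE'
      exact hM.pairwiseDisjoint (hS hE) hE'.1 fun h ↦ hE'.2 (h ▸ hE)
    have hUS : Disjoint U (verts (M \ S)) :=
      hUM.mono_right (biUnion_subset_biUnion_of_subset_left _ sdiff_subset)
    refine (disjoint_union_left.2 ⟨hUS, hSM⟩).mono_left (verts_subset_iff.2 fun A hA ↦ ?_)
    obtain ⟨i, -, rfl⟩ := mem_image.1 hA
    exact colourClass_subset_verts.trans (verts_insert U S).subset
  have hle := hM.card_le_of_exchange hF hS (isMatching_image_colourClass hall) hdisj
  rw [card_image_colourClass fun i hi ↦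
    nonempty_iff_ne_empty.2 fun h ↦ hF (h ▸ hall i hi)] at hle
  omega

theorem card_filter_colourClass_notMem_le (hM : IsMaxMatching F M) (hk : k ≠ 0)
    (hF : F ⊆ powersetCard k V) (hUV : U ⊆ V) (hUM : Disjoint U (verts M)) (hU : #U = k)
    (hc : ∀ E ∈ insert U M, #{x ∈ E | c x = i} = 1)
    (hD : ∀ v ∈ U, degree (powersetCard k V \ F) v ≤ D) :
    #{S ∈ powersetCard (k - 1) M | colourClass c (insert U S) i ∉ F} ≤ D := by
  have hN := hM.pairwiseDisjoint_insert hUM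
  have hU_notMem : U ∉ M := fun h ↦ by
    have hU0 := disjoint_self_iff_empty U |>.1 (hUM.mono_right (subset_verts h))
    exact hk (by rw [← hU, hU0, card_empty])
  obtain ⟨u, hu⟩ := card_pos.1 (hc U (mem_insert_self U M)).symm.le
  rw [mem_filter] at hu
  refine (card_le_card_of_injOn (fun S ↦ colourClass c (insert U S) i) ?_ ?_).trans (hD u hu.1)
  · intro S hS
    obtain ⟨hSM, hSF⟩ := mem_filter.1 hS
    obtain ⟨hSM, hSk⟩ := mem_powersetCard.1 hSM
    have hsub : insert U S ⊆ insert U M := insert_subset_insert U hSM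
    have hsubV : verts (insert U S) ⊆ V := verts_subset_iff.2 <| forall_mem_insert .. |>.2
      ⟨hUV, fun E hE ↦ (mem_powersetCard.1 (hF (hM.subset (hSM hE)))).1⟩
    have hcard : #(colourClass c (insert U S) i) = k := by
      rw [card_colourClass (hN.subset (coe_subset.2 hsub)) fun E hE ↦ hc E (hsub hE),
        card_insert_of_notMem fun h ↦ hU_notMem (hSM h), hSk, Nat.sub_one_add_one hk]
    refine mem_coe.2 (mem_filter.2 ⟨mem_sdiff.2 ⟨mem_powersetCard.2
      ⟨colourClass_subset_verts.trans hsubV, hcard⟩, hSF⟩, ?_⟩)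
    exact mem_filter.2 ⟨subset_verts (mem_insert_self U S) hu.1, hu.2⟩
  · intro S hS S' hS' h
    have hSM := (mem_powersetCard.1 (mem_filter.1 hS).1).1
    have hSM' := (mem_powersetCard.1 (mem_filter.1 hS').1).1
    have hins := colourClass_injOn hN hc (insert_subset_insert U hSM)
      (insert_subset_insert U hSM') h
    rw [← erase_insert fun h ↦ hU_notMem (hSM h), hins,
      erase_insert fun h ↦ hU_notMem (hSM' h)]

theorem choose_card_le (hM : IsMaxMatching F M) (hk : k ≠ 0) (hF : F ⊆ powersetCard k V)
    (hUV : U ⊆ V) (hUM : Disjoint U (verts M)) (hU : #U = k)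
    (hD : ∀ v ∈ U, degree (powersetCard k V \ F) v ≤ D) : (#M).choose (k - 1) ≤ k * D := by
  have hF0 : ∅ ∉ F := fun h ↦ hk (mem_powersetCard.1 (hF h)).2.symm
  obtain ⟨c, hc⟩ := exists_colouring (hM.pairwiseDisjoint_insert hUM) <|
    forall_mem_insert .. |>.2 ⟨hU, fun E hE ↦ (mem_powersetCard.1 (hF (hM.subset hE))).2⟩
  have hcover : powersetCard (k - 1) M ⊆ (range k).biUnion fun i ↦
      {S ∈ powersetCard (k - 1) M | colourClass c (insert U S) i ∉ F} := by
    intro S hS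
    obtain ⟨hSM, hSk⟩ := mem_powersetCard.1 hS
    obtain ⟨i, hi, hiF⟩ := hM.exists_colourClass_notMem hF0 (c := c) hUM hSM
      (hSk.trans_lt (Nat.sub_one_lt hk))
    exact mem_biUnion.2 ⟨i, mem_range.2 hi, mem_filter.2 ⟨hS, hiF⟩⟩
  calc (#M).choose (k - 1) = #(powersetCard (k - 1) M) := (card_powersetCard ..).symm
    _ ≤ #(range k) * D := (card_le_card hcover).trans <| card_biUnion_le_card_mul _ _ _ fun i hi ↦
        hM.card_filter_colourClass_notMem_le hk hF hUV hUM hU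
          (fun E hE ↦ hc E hE i (mem_range.1 hi)) hD
    _ = k * D := by rw [card_range]

end IsMaxMatching

end ColourClass

section NearPerfect

variable {α : Type*} [DecidableEq α] {F M : Finset (Finset α)} {B I V X : Finset α}
  {k D q : ℕ}

-- If `k` vertices stay uncovered, exchange along colour classes forces `#M < q`, and then the more
-- than `q` uncovered vertices span no edge, so one of them has large missing degree.
theorem IsMaxMatching.card_lt (hM : IsMaxMatching F M) (hk : k ≠ 0) (hF : F ⊆ powersetCard k V)
    (hV : 2 * k * q ≤ #V) (hq : k * D < q.choose (k - 1))
    (hD : ∀ v ∈ V, degree (powersetCard k V \ F) v ≤ D) : #V < k * #M + k := by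
  have hF0 : ∅ ∉ F := fun h ↦ hk (mem_powersetCard.1 (hF h)).2.symm
  have hvertsV : verts M ⊆ V :=
    verts_subset_iff.2 fun A hA ↦ (mem_powersetCard.1 (hF (hM.subset hA))).1
  have hvertsM : #(verts M) = k * #M := hM.card_verts fun A hA ↦ (mem_powersetCard.1 (hF hA)).2
  have hfree : #(V \ verts M) = #V - k * #M := by rw [card_sdiff_of_subset hvertsV, hvertsM]
  by_contra! hle
  obtain ⟨U, hU, hUk⟩ := exists_subset_card_eq (show k ≤ #(V \ verts M) by omega)
  obtain ⟨hUV, hUM⟩ := subset_sdiff.1 hU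
  have hMq : #M < q := by
    by_contra! hqM
    have hMD := hM.choose_card_le hk hF hUV hUM hUk fun v hv ↦ hD v (hUV hv)
    exact (hq.trans_le (Nat.choose_le_choose _ hqM)).not_ge hMD
  have hmissing : powersetCard k (V \ verts M) ⊆ powersetCard k V \ F := fun A hA ↦ by
    obtain ⟨hAV, hAk⟩ := mem_powersetCard.1 hA
    exact mem_sdiff.2 ⟨mem_powersetCard.2 ⟨hAV.trans sdiff_subset, hAk⟩,
      fun hAF ↦ hM.not_disjoint_verts hF0 hAF (subset_sdiff.1 hAV).2⟩
  have hqfree : q ≤ #(V \ verts M) - 1 := by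
    have hkM : k * #M + k ≤ k * q := Nat.mul_le_mul_left k hMq
    have hkq : q ≤ k * q := Nat.le_mul_of_pos_left q (Nat.pos_of_ne_zero hk)
    have h2 : 2 * k * q = k * q + k * q := by ring
    omega
  obtain ⟨u, hu⟩ := card_pos.1 (hUk ▸ Nat.pos_of_ne_zero hk : 0 < #U)
  have hdeg := (degree_mono hmissing u).trans (hD u (hUV hu))
  rw [degree_powersetCard hk (hU hu)] at hdeg
  have hDk : D ≤ k * D := Nat.le_mul_of_pos_left D (Nat.pos_of_ne_zero hk)
  exact (hq.trans_le (Nat.choose_le_choose _ hqfree)).not_ge (hdeg.trans hDk)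

theorem IsMatching.exists_superset_covering (hM : IsMatching F M) (hF : F ⊆ powersetCard k V)
    (hI : ∀ v ∈ I, D < degree F v) (hIB : Disjoint I B)
    (hD : (k * (#M + #I) + #B) * (#V - 2).choose (k - 2) ≤ D) :
    ∃ N, IsMatching F N ∧ I ⊆ verts N ∧ verts N ∩ B = verts M ∩ B ∧ #N ≤ #M + #I := by
  induction I using Finset.induction_on with
  | empty => exact ⟨M, hM, by simp⟩
  | insert v I hv ih =>
    rw [card_insert_of_notMem hv] at hD
    rw [disjoint_insert_left] at hIB
    rw [forall_mem_insert] at hI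
    obtain ⟨N, hN, hIN, hNB, hcard⟩ := ih hI.2 hIB.2 <|
      le_trans (by gcongr; omega) hD
    rw [card_insert_of_notMem hv]
    by_cases hvN : v ∈ verts N
    · exact ⟨N, hN, insert_subset hvN hIN, hNB, by omega⟩
    obtain ⟨A, hAF, hvA, hA⟩ : ∃ A ∈ F, v ∈ A ∧ Disjoint A (verts N ∪ B) := by
      by_contra! hall
      have hdeg := degree_le_card_mul_choose hF (notMem_union.2 ⟨hvN, hIB.1⟩) hall
      have hNB : #(verts N ∪ B) ≤ k * (#M + (#I + 1)) + #B := by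
        rw [← add_assoc]
        refine (card_union_le _ _).trans (Nat.add_le_add_right ?_ _)
        rw [hN.card_verts fun A hA ↦ (mem_powersetCard.1 (hF hA)).2]
        gcongr
        omega
      exact (hI.1.trans_le (hdeg.trans (Nat.mul_le_mul_right _ hNB))).not_ge hD
    obtain ⟨hAN, hAB⟩ := disjoint_union_right.1 hA
    refine ⟨insert A N, hN.insert hAF hAN, ?_, ?_, ?_⟩
    · rw [verts_insert]
      exact insert_subset (mem_union_left _ hvA) (hIN.trans subset_union_right)
    · rw [verts_insert, union_inter_distrib_right, disjoint_iff_inter_eq_empty.1 hAB, empty_union,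
        hNB]
    · exact (card_insert_le _ _).trans (by omega)

theorem IsMatching.exists_card_lt (hM : IsMatching F M) (hk : k ≠ 0)
    (hF : F ⊆ powersetCard k V) (hMX : verts M ⊆ X)
    (hV : 2 * k * q ≤ #(V \ X)) (hq : k * D < q.choose (k - 1))
    (hD : ∀ v ∈ V \ X, degree (powersetCard k V \ F) v ≤ D) :
    ∃ N, IsMatching F N ∧ #(V \ X) + k * #M < k * #N + k := by
  obtain ⟨N, hN⟩ := exists_isMaxMatching {A ∈ F | A ⊆ V \ X}
  have hFX : {A ∈ F | A ⊆ V \ X} ⊆ powersetCard k (V \ X) := fun A hA ↦ by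
    obtain ⟨hAF, hAX⟩ := mem_filter.1 hA
    exact mem_powersetCard.2 ⟨hAX, (mem_powersetCard.1 (hF hAF)).2⟩
  have hmissing : powersetCard k (V \ X) \ {A ∈ F | A ⊆ V \ X} ⊆ powersetCard k V \ F := by
    intro A hA
    obtain ⟨hAX, hAF⟩ := mem_sdiff.1 hA
    exact mem_sdiff.2 ⟨powersetCard_mono sdiff_subset hAX, fun h ↦
      hAF (mem_filter.2 ⟨h, (mem_powersetCard.1 hAX).1⟩)⟩
  have hlt := hN.card_lt hk hFX hV hq fun v hv ↦ (degree_mono hmissing v).trans (hD v hv)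
  have hNF : IsMatching F N := hN.mono (filter_subset _ _)
  have hdisj : Disjoint (verts M) (verts N) := by
    refine disjoint_sdiff.mono hMX (verts_subset_iff.2 fun A hA ↦ (mem_filter.1 (hN.subset hA)).2)
  refine ⟨M ∪ N, hM.union hNF hdisj, ?_⟩
  rw [card_union_of_disjoint (disjoint_of_disjoint_verts ?_ hdisj), mul_add]
  · omega
  · exact fun h ↦ hk (mem_powersetCard.1 (hF (hM.subset h))).2.symm

end NearPerfect

section LowDegree

variable {α : Type*} [DecidableEq α] {F M : Finset (Finset α)} {B V : Finset α} {v : α}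
  {k D q s c d : ℕ}

/-- The vertices of `V` lying in at most `D` members of `F`. -/
def lowDegreeVerts (V : Finset α) (F : Finset (Finset α)) (D : ℕ) : Finset α :=
  {v ∈ V | degree F v ≤ D}

/-- The vertices of `V` at which more than `D` of the `k`-subsets of `V` are missing from `F`. -/
def deficientVerts (k : ℕ) (V : Finset α) (F : Finset (Finset α)) (D : ℕ) : Finset α :=
  {v ∈ V | D < degree (powersetCard k V \ F) v}

theorem lowDegreeVerts_subset : lowDegreeVerts V F D ⊆ V :=
  filter_subset _ _

theorem degree_le_of_mem_lowDegreeVerts (hv : v ∈ lowDegreeVerts V F D) : degree F v ≤ D :=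
  (mem_filter.1 hv).2

theorem lt_degree_of_mem_sdiff_lowDegreeVerts (hv : v ∈ V \ lowDegreeVerts V F D) :
    D < degree F v := by
  obtain ⟨hvV, hvB⟩ := mem_sdiff.1 hv
  exact lt_of_not_ge fun h ↦ hvB (mem_filter.2 ⟨hvV, h⟩)

theorem lowDegreeVerts_subset_deficientVerts (hk : k ≠ 0) (hF : F ⊆ powersetCard k V)
    (hD : 2 * D < (#V - 1).choose (k - 1)) :
    lowDegreeVerts V F D ⊆ deficientVerts k V F D := fun v hv ↦ by
  obtain ⟨hvV, hvD⟩ := mem_filter.1 hv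
  have hsum := degree_add_degree_sdiff hk hF hvV
  exact mem_filter.2 ⟨hvV, by omega⟩

theorem card_deficientVerts_mul_le (hF : F ⊆ powersetCard k V) :
    #(deficientVerts k V F D) * (D + 1) ≤ k * ((#V).choose k - #F) := by
  rw [← card_powersetCard, ← card_sdiff_of_subset hF]
  exact card_mul_le_mul_card_of_lt_degree
    (fun A hA ↦ (mem_powersetCard.1 (mem_sdiff.1 hA).1).2) fun v hv ↦ (mem_filter.1 hv).2

theorem IsMatching.exists_covering_deficientVerts (hk : k ≠ 0) (hF : F ⊆ powersetCard k V)
    (hD : 2 * D < (#V - 1).choose (k - 1))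
    (hdef : (k + 1) * #(deficientVerts k V F D) * (#V - 2).choose (k - 2) ≤ D)
    (hM : IsMatching {A ∈ F | ¬Disjoint A (lowDegreeVerts V F D)} M) :
    ∃ N, IsMatching F N ∧ deficientVerts k V F D ⊆ verts N ∪ lowDegreeVerts V F D ∧
      verts N ∩ lowDegreeVerts V F D = verts M ∩ lowDegreeVerts V F D ∧
      #N ≤ #(deficientVerts k V F D) := by
  set B := lowDegreeVerts V F D
  set L := deficientVerts k V F D
  have hBL : B ⊆ L := lowDegreeVerts_subset_deficientVerts hk hF hD
  have hML : #M + #(L \ B) ≤ #L := by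
    rw [← card_sdiff_add_card_eq_card hBL, add_comm]
    gcongr
    exact hM.card_le_card_verts_inter.trans (card_le_card inter_subset_right)
  obtain ⟨N, hN, hLN, hNB, hcard⟩ := (hM.mono (filter_subset _ F)).exists_superset_covering
    (I := L \ B) (B := B) (D := D) hF
    (fun v hv ↦ lt_degree_of_mem_sdiff_lowDegreeVerts (sdiff_subset_sdiff (filter_subset _ V)
      subset_rfl hv)) sdiff_disjoint <| by
      refine le_trans (Nat.mul_le_mul_right _ ?_) hdef
      rw [add_mul, one_mul]
      gcongr
  exact ⟨N, hN, sdiff_le_iff'.1 hLN, hNB, hcard.trans hML⟩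

theorem IsMatching.card_add_card_verts_inter_lowDegreeVerts_lt (hk : k ≠ 0)
    (hF : F ⊆ powersetCard k V) (hs : ∀ N, IsMatching F N → #N ≤ s)
    (hD : 2 * D < (#V - 1).choose (k - 1)) (hq : k * D < q.choose (k - 1))
    (hdef : (k + 1) * #(deficientVerts k V F D) * (#V - 2).choose (k - 2) ≤ D)
    (hV : 2 * k * q + (k + 1) * #(deficientVerts k V F D) ≤ #V)
    (hM : IsMatching {A ∈ F | ¬Disjoint A (lowDegreeVerts V F D)} M) :
    #V + #(verts M ∩ lowDegreeVerts V F D) < #(lowDegreeVerts V F D) + k * s + k := by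
  obtain ⟨N, hN, hLN, hNB, hNL⟩ := hM.exists_covering_deficientVerts hk hF hD hdef
  have hBL := card_le_card (lowDegreeVerts_subset_deficientVerts hk hF hD)
  set B := lowDegreeVerts V F D
  set X := verts N ∪ B
  have hXV : X ⊆ V := union_subset
    (verts_subset_iff.2 fun A hA ↦ (mem_powersetCard.1 (hF (hN.subset hA))).1)
    lowDegreeVerts_subset
  have hvertsN : #(verts N) = k * #N := hN.card_verts fun A hA ↦ (mem_powersetCard.1 (hF hA)).2
  have hX : #X + #(verts N ∩ B) = k * #N + #B := hvertsN ▸ card_union_add_card_inter (verts N) B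
  have hVX : #(V \ X) + #X = #V := card_sdiff_add_card_eq_card hXV
  have hXle : #X ≤ (k + 1) * #(deficientVerts k V F D) := by
    have hkN := Nat.mul_le_mul_left k hNL
    rw [add_mul, one_mul]
    omega
  obtain ⟨N', hN', hlt⟩ := hN.exists_card_lt (X := X) hk hF subset_union_left (q := q) (D := D)
    (by omega) hq fun v hv ↦ by
      obtain ⟨hvV, hvX⟩ := mem_sdiff.1 hv
      exact le_of_not_gt fun h ↦ hvX (hLN (mem_filter.2 ⟨hvV, h⟩))
  have hks : k * #N' ≤ k * s := Nat.mul_le_mul_left k (hs N' hN')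
  rw [← hNB]
  omega

theorem card_filter_not_disjoint_le (hF : F ⊆ powersetCard k V)
    (hB : ∀ v ∈ B, degree F v ≤ D)
    (hc : ∀ M, IsMatching {A ∈ F | ¬Disjoint A B} M → #(verts M ∩ B) ≤ c) :
    #{A ∈ F | ¬Disjoint A B} ≤ c * D + #B * (k * c * (#V - 2).choose (k - 2)) := by
  set F' := {A ∈ F | ¬Disjoint A B}
  have hF' : F' ⊆ F := filter_subset _ F
  have hF'0 : ∅ ∉ F' := fun h ↦ (mem_filter.1 h).2 (disjoint_empty_left B)
  obtain ⟨N, hN⟩ := exists_isMaxMatching F'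
  have hNc : #N ≤ c := hN.card_le_card_verts_inter.trans (hc N hN.toIsMatching)
  calc #F' ≤ #(B ∩ verts N) * D + #(B \ verts N) * (#(verts N) * (#V - 2).choose (k - 2)) :=
        card_le_of_not_disjoint (hF'.trans hF) (fun A hA ↦ (mem_filter.1 hA).2)
          (fun A hA ↦ hN.not_disjoint_verts hF'0 hA)
          fun v hv ↦ (degree_mono hF' v).trans (hB v (mem_inter.1 hv).1)
    _ ≤ c * D + #B * (k * c * (#V - 2).choose (k - 2)) := by
        rw [inter_comm, hN.card_verts fun A hA ↦ (mem_powersetCard.1 (hF (hF' hA))).2]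
        gcongr
        · exact hc N hN.toIsMatching
        · exact sdiff_subset

theorem card_le_choose_add_of_card_verts_inter_le (hk : k ≠ 0) (hd : d ≠ 0)
    (hF : F ⊆ powersetCard k V) (hB : ∀ v ∈ B, degree F v ≤ D)
    (hBD : k * #B * (#V - 2).choose (k - 2) ≤ D) (hD : 4 * D ≤ (#(V \ B)).choose (k - 1))
    (hc : ∀ M, IsMatching {A ∈ F | ¬Disjoint A B} M → #(verts M ∩ B) ≤ d + 1) :
    #F ≤ (#(V \ B) + d).choose k := by
  obtain ⟨k, rfl⟩ := Nat.exists_eq_succ_of_ne_zero hk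
  refine (card_le_choose_sdiff_add hF B).trans (le_trans ?_ (choose_succ_add_mul_choose_le _ _ d))
  gcongr
  calc #{A ∈ F | ¬Disjoint A B}
      ≤ (d + 1) * D + #B * ((k + 1) * (d + 1) * (#V - 2).choose (k + 1 - 2)) :=
        card_filter_not_disjoint_le hF hB hc
    _ = (d + 1) * (D + (k + 1) * #B * (#V - 2).choose (k + 1 - 2)) := by ring
    _ ≤ (2 * d) * (D + D) := by gcongr; omega
    _ = d * (4 * D) := by ring
    _ ≤ d * (#(V \ B)).choose k := Nat.mul_le_mul_left d hD

end LowDegree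

section CrossIntersecting

variable {α : Type*} {G A : Finset α} {P Q : Finset (Finset α)} {l t : ℕ}

/-- Every member of `P` meets every member of `Q`. -/
def CrossIntersecting (P Q : Finset (Finset α)) : Prop :=
  ∀ A ∈ P, ∀ B ∈ Q, ¬Disjoint A B

namespace CrossIntersecting

variable {B B' : Finset α} {x : α}

theorem card_le_choose_sub (h : CrossIntersecting P Q) (hP : P ⊆ powersetCard l G) (hB : B ∈ Q)
    (hBG : B ⊆ G) : #P ≤ (#G).choose l - (#G - #B).choose l := by
  classical
  rw [← card_filter_not_disjoint_powersetCard l hBG]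
  exact card_le_card fun A hA ↦ mem_filter.2 ⟨hP hA, h A hA B hB⟩

theorem card_le_of_ne (h : CrossIntersecting P Q) (hP : P ⊆ powersetCard l G)
    (hQ : ∀ B ∈ Q, #B = l) (hB : B ∈ Q) (hB' : B' ∈ Q) (hne : B ≠ B') :
    #P ≤ (l - 1) * (#G - 1).choose (l - 1) + l * (l * (#G - 2).choose (l - 2)) := by
  classical
  have hinter : #(B ∩ B') ≤ l - 1 := by
    have hss : B ∩ B' ⊂ B := inter_subset_left.ssubset_of_ne fun heq ↦
      hne (eq_of_subset_of_card_le (inter_eq_left.1 heq) (by rw [hQ B hB, hQ B' hB']))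
    have hlt := card_lt_card hss
    rw [hQ B hB] at hlt
    omega
  refine (card_le_of_not_disjoint hP (fun A hA ↦ h A hA B hB) (fun A hA ↦ h A hA B' hB')
    fun v _ ↦ degree_le_choose hP v).trans ?_
  have hsdiff : #(B \ B') ≤ l := (card_le_card sdiff_subset).trans (hQ B hB).le
  rw [hQ B' hB']
  gcongr

theorem card_le_of_forall_exists_notMem (h : CrossIntersecting P Q) (hP : P ⊆ powersetCard l G)
    (hQ : ∀ B ∈ Q, #B = l) (hB : B ∈ Q) (hcommon : ∀ x, ∃ B ∈ Q, x ∉ B) :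
    #P ≤ l * (l * (#G - 2).choose (l - 2)) := by
  classical
  calc #P ≤ ∑ x ∈ B, degree P x := card_le_sum_degree fun A hA ↦ h A hA B hB
    _ ≤ #B * (l * (#G - 2).choose (l - 2)) := sum_le_card_nsmul _ _ _ fun x _ ↦ by
        obtain ⟨B', hB', hx⟩ := hcommon x
        simpa only [hQ B' hB'] using degree_le_card_mul_choose hP hx fun A hA _ ↦ h A hA B' hB'
    _ = l * (l * (#G - 2).choose (l - 2)) := by rw [hQ B hB]

theorem card_le_of_forall_mem (h : CrossIntersecting P Q) (hQ : Q ⊆ powersetCard l G)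
    (hA : A ∈ P) (hxA : x ∉ A) (hxQ : ∀ B ∈ Q, x ∈ B) :
    #Q ≤ #A * (#G - 2).choose (l - 2) := by
  classical
  have hdeg : degree Q x = #Q := congrArg card (filter_true_of_mem hxQ)
  exact hdeg ▸ degree_le_card_mul_choose hQ hxA fun B hB _ ↦
    fun hBA ↦ h A hA B hB hBA.symm

end CrossIntersecting

theorem mul_choose_pred_le {g : ℕ} (hl : 2 ≤ l) (hg : l ≤ g) :
    l * (g - 1).choose (l - 1) ≤
      g.choose l - (g - l).choose l + l * (l * (g - 2).choose (l - 2)) := by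
  obtain ⟨r, rfl⟩ := Nat.exists_eq_add_of_le' hl
  obtain ⟨m, rfl⟩ := Nat.exists_eq_add_of_le' hg
  have hlower := choose_succ_add_mul_choose_le m (r + 1) (r + 2)
  have hupper := choose_succ_le_add_mul_choose m r (r + 1)
  simp only [Nat.add_sub_cancel, show m + (r + 2) - 1 = m + (r + 1) by omega,
    show m + (r + 2) - 2 = m + (r + 1) - 1 by omega, show r + 2 - 1 = r + 1 by omega]
  calc (r + 2) * (m + (r + 1)).choose (r + 1)
      ≤ (r + 2) * (m.choose (r + 1) + (r + 2) * (m + (r + 1) - 1).choose r) := by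
        gcongr
        exact hupper.trans (by gcongr; omega)
    _ = (r + 2) * m.choose (r + 1) + (r + 2) * ((r + 2) * (m + (r + 1) - 1).choose r) := mul_add ..
    _ ≤ _ := Nat.add_le_add_right (Nat.le_sub_of_add_le' hlower) _

theorem mul_add_le_max_of_mul_choose_le {g : ℕ} (hl : 2 ≤ l) (hg : l ≤ g)
    (ha : 4 * l ^ 2 * (g - 2).choose (l - 2) ≤ (g - 1).choose (l - 1)) :
    (l - 1) * (g - 1).choose (l - 1) + l * (l * (g - 2).choose (l - 2)) +
        t * (l * (g - 2).choose (l - 2)) ≤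
      max (g.choose l - (g - l).choose l + t) ((t + 1) * (g - 1).choose (l - 1)) := by
  have hpred := mul_choose_pred_le hl hg
  set a := (g - 2).choose (l - 2)
  set p := (g - 1).choose (l - 1)
  have hla : 4 * (l * (l * a)) ≤ p := le_trans (by ring_nf; rfl) ha
  have hlp : (l - 1) * p + p = l * p := by
    rw [← Nat.succ_mul, Nat.succ_eq_add_one, Nat.sub_add_cancel (by omega)]
  obtain htl | htl := le_total t l
  · refine le_max_of_le_left ?_
    have hta : t * (l * a) ≤ l * (l * a) := Nat.mul_le_mul_right _ htl
    omega
  · refine le_max_of_le_right ?_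
    obtain ⟨j, rfl⟩ := Nat.exists_eq_add_of_le htl
    have hja : j * (l * a) ≤ j * p :=
      Nat.mul_le_mul_left j (le_trans (Nat.le_mul_of_pos_left _ (by omega))
        ((Nat.le_mul_of_pos_left _ (by omega)).trans hla))
    calc (l - 1) * p + l * (l * a) + (l + j) * (l * a)
        = (l - 1) * p + 2 * (l * (l * a)) + j * (l * a) := by ring
      _ ≤ l * p + j * p + p := by omega
      _ = (l + j + 1) * p := by ring

theorem CrossIntersecting.card_add_mul_card_le (h : CrossIntersecting P Q)
    (hl : 2 ≤ l) (hG : 4 * l ^ 2 * (l - 1) < #G) (hP : P ⊆ powersetCard l G)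
    (hQ : Q ⊆ powersetCard l G) (hQne : Q.Nonempty) (hQP : #Q ≤ #P) (t : ℕ) :
    #P + t * #Q ≤
      max ((#G).choose l - (#G - l).choose l + t) ((t + 1) * (#G - 1).choose (l - 1)) := by
  classical
  have ha : 4 * l ^ 2 * (#G - 2).choose (l - 2) ≤ (#G - 1).choose (l - 1) :=
    mul_choose_sub_two_le hl (by omega)
  have hQl : ∀ B ∈ Q, #B = l := fun B hB ↦ (mem_powersetCard.1 (hQ hB)).2
  have hPl : ∀ A ∈ P, #A = l := fun A hA ↦ (mem_powersetCard.1 (hP hA)).2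
  have of_card_le (hPp : #P ≤ (#G - 1).choose (l - 1)) : #P + t * #Q ≤
      max ((#G).choose l - (#G - l).choose l + t) ((t + 1) * (#G - 1).choose (l - 1)) := by
    refine le_max_of_le_right ?_
    rw [add_mul, one_mul, add_comm]
    exact add_le_add (Nat.mul_le_mul_left t (hQP.trans hPp)) hPp
  obtain ⟨B, hB⟩ := hQne
  have hlG : l ≤ #G := hQl B hB ▸ card_le_card (mem_powersetCard.1 (hQ hB)).1
  obtain hQ1 | ⟨B₁, hB₁, B₂, hB₂, hne⟩ : #Q ≤ 1 ∨ ∃ B₁ ∈ Q, ∃ B₂ ∈ Q, B₁ ≠ B₂ := by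
    rw [← one_lt_card]
    exact le_or_gt _ _
  · have hPB := h.card_le_choose_sub hP hB (mem_powersetCard.1 (hQ hB)).1
    rw [hQl B hB] at hPB
    exact le_max_of_le_left (add_le_add hPB (mul_le_of_le_one_right t.zero_le hQ1))
  by_cases hcommon : ∃ x, ∀ B ∈ Q, x ∈ B
  · obtain ⟨x, hxQ⟩ := hcommon
    by_cases hxP : ∀ A ∈ P, x ∈ A
    · refine of_card_le (le_trans ?_ (degree_le_choose hP x))
      exact (congrArg card (filter_true_of_mem hxP)).ge
    · push Not at hxP
      obtain ⟨A, hA, hxA⟩ := hxP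
      have hQa := h.card_le_of_forall_mem hQ hA hxA hxQ
      rw [hPl A hA] at hQa
      exact (add_le_add (h.card_le_of_ne hP hQl hB₁ hB₂ hne) (Nat.mul_le_mul_left t hQa)).trans
        (mul_add_le_max_of_mul_choose_le hl hlG ha)
  · push Not at hcommon
    refine of_card_le ((h.card_le_of_forall_exists_notMem hP hQl hB hcommon).trans
      (le_trans ?_ ha))
    rw [← mul_assoc, ← pow_two]
    gcongr
    omega

end CrossIntersecting

section IntersectingTrace

variable {α : Type*} [DecidableEq α] {F : Finset (Finset α)} {B V : Finset α} {v w : α} {k : ℕ}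

theorem intersecting_of_isMatching_card_le_one (hF : ∅ ∉ F)
    (hc : ∀ M, IsMatching F M → #M ≤ 1) : (F : Set (Finset α)).Intersecting := by
  intro A hA A' hA' hAA'
  have hne : A ≠ A' := fun h ↦ hF (disjoint_self_iff_empty A |>.1 (h.symm ▸ hAA') ▸ hA)
  have hM := (IsMatching.singleton hA').insert hA (by rwa [verts_singleton])
  have htwo := hc _ hM
  rw [card_pair hne] at htwo
  omega

theorem memberSubfamily_subset_powersetCard_sdiff (hF : F ⊆ powersetCard k V)
    (hone : ∀ A ∈ F, #(A ∩ B) ≤ 1) (hv : v ∈ B) :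
    F.memberSubfamily v ⊆ powersetCard (k - 1) (V \ B) := by
  intro S hS
  obtain ⟨hSF, hvS⟩ := mem_memberSubfamily.1 hS
  obtain ⟨hSV, hSk⟩ := mem_powersetCard.1 (hF hSF)
  rw [card_insert_of_notMem hvS] at hSk
  refine mem_powersetCard.2 ⟨fun x hx ↦ mem_sdiff.2 ⟨hSV (mem_insert_of_mem hx), fun hxB ↦ ?_⟩,
    by omega⟩
  have hxv : x = v := card_le_one.1 (hone _ hSF) x (mem_inter.2 ⟨mem_insert_of_mem hx, hxB⟩) v
    (mem_inter.2 ⟨mem_insert_self v S, hv⟩)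
  exact hvS (hxv ▸ hx)

theorem crossIntersecting_memberSubfamily (hF : F ⊆ powersetCard k V)
    (hone : ∀ A ∈ F, #(A ∩ B) ≤ 1)
    (hinter : ({A ∈ F | ¬Disjoint A B} : Set (Finset α)).Intersecting)
    (hv : v ∈ B) (hw : w ∈ B) (hvw : v ≠ w) :
    CrossIntersecting (F.memberSubfamily v) (F.memberSubfamily w) := by
  intro S hS T hT hST
  have hSB := (subset_sdiff.1 (mem_powersetCard.1
    (memberSubfamily_subset_powersetCard_sdiff hF hone hv hS)).1).2
  have hTB := (subset_sdiff.1 (mem_powersetCard.1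
    (memberSubfamily_subset_powersetCard_sdiff hF hone hw hT)).1).2
  refine hinter (a := insert v S) (b := insert w T) ?_ ?_ ?_
  · exact ⟨(mem_memberSubfamily.1 hS).1, not_disjoint_iff.2 ⟨v, mem_insert_self v S, hv⟩⟩
  · exact ⟨(mem_memberSubfamily.1 hT).1, not_disjoint_iff.2 ⟨w, mem_insert_self w T, hw⟩⟩
  · have hvT : v ∉ T := disjoint_right.1 hTB hv
    have hwS : w ∉ S := disjoint_right.1 hSB hw
    simp [hvw.symm, hvT, hwS, hST]

theorem card_le_choose_add_degree_add_mul (hF : F ⊆ powersetCard k V) (hv : v ∈ B)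
    (hw : ∀ x ∈ B.erase v, degree F x ≤ degree F w) :
    #F ≤ (#(V \ B)).choose k + (degree F v + (#B - 1) * degree F w) := by
  refine (card_le_choose_sdiff_add hF B).trans (Nat.add_le_add_left ?_ _)
  calc #{A ∈ F | ¬Disjoint A B} ≤ ∑ x ∈ B, degree {A ∈ F | ¬Disjoint A B} x :=
        card_le_sum_degree fun A hA ↦ (mem_filter.1 hA).2
    _ ≤ ∑ x ∈ B, degree F x := sum_le_sum fun x _ ↦ degree_mono (filter_subset _ F) x
    _ = degree F v + ∑ x ∈ B.erase v, degree F x := (add_sum_erase B _ hv).symm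
    _ ≤ degree F v + (#B - 1) * degree F w := by
        rw [← card_erase_of_mem hv]
        gcongr
        exact sum_le_card_nsmul _ _ _ hw

theorem exists_subset_insert_or_card_le (hk : 3 ≤ k) (hF : F ⊆ powersetCard k V) (hBV : B ⊆ V)
    (hB : 2 ≤ #B) (hG : 4 * (k - 1) ^ 2 * (k - 2) < #(V \ B))
    (hone : ∀ A ∈ F, #(A ∩ B) ≤ 1)
    (hinter : ({A ∈ F | ¬Disjoint A B} : Set (Finset α)).Intersecting) :
    (∃ W ⊆ V, #W = #(V \ B) + 1 ∧ ∀ A ∈ F, A ⊆ W) ∨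
    #F ≤ (#(V \ B)).choose k +
      max ((#(V \ B)).choose (k - 1) - (#(V \ B) - (k - 1)).choose (k - 1) + (#B - 1))
        (#B * (#(V \ B) - 1).choose (k - 2)) := by
  obtain ⟨v, hv, hvmax⟩ := exists_max_image B (degree F) (card_pos.1 (by omega))
  obtain ⟨w, hw, hwmax⟩ := exists_max_image (B.erase v) (degree F)
    (card_pos.1 (by rw [card_erase_of_mem hv]; omega))
  obtain ⟨hwv, hwB⟩ := mem_erase.1 hw
  obtain hw0 | hw0 := Nat.eq_zero_or_pos (degree F w)
  · refine .inl ⟨insert v (V \ B), insert_subset (hBV hv) sdiff_subset,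
      card_insert_of_notMem fun h ↦ (mem_sdiff.1 h).2 hv, fun A hA x hx ↦ mem_insert.2 ?_⟩
    by_contra! hxW
    have hxB : x ∈ B := by
      by_contra hxB
      exact hxW.2 (mem_sdiff.2 ⟨(mem_powersetCard.1 (hF hA)).1 hx, hxB⟩)
    have hx0 : degree F x = 0 := by
      simpa [hw0] using hwmax x (mem_erase.2 ⟨hxW.1, hxB⟩)
    exact (card_pos.2 ⟨A, mem_filter.2 ⟨hA, hx⟩⟩).ne' hx0
  · refine .inr ((card_le_choose_add_degree_add_mul hF hv hwmax).trans (Nat.add_le_add_left ?_ _))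
    have hcross := crossIntersecting_memberSubfamily hF hone hinter hv hwB hwv.symm
    have hbound := hcross.card_add_mul_card_le (l := k - 1) (by omega) hG
      (memberSubfamily_subset_powersetCard_sdiff hF hone hv)
      (memberSubfamily_subset_powersetCard_sdiff hF hone hwB)
      (card_pos.1 ((card_memberSubfamily F w).symm ▸ hw0))
      (by simpa only [card_memberSubfamily] using hvmax w hwB) (#B - 1)
    rwa [card_memberSubfamily, card_memberSubfamily, Nat.sub_add_cancel (by omega)] at hbound

end IntersectingTrace

section ExtremalFamilies

variable {α : Type*} [DecidableEq α] {G : Finset α} {E : Finset (Finset α)}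
  {R : Finset (α × Finset α)} {k : ℕ}

theorem insert_injOn_of_notMem_of_subset (G : Finset α) :
    Set.InjOn (fun p : α × Finset α ↦ insert p.1 p.2) {p | p.1 ∉ G ∧ p.2 ⊆ G} := by
  rintro ⟨x, T⟩ ⟨hx, hT⟩ ⟨y, U⟩ ⟨hy, hU⟩ (h : insert x T = insert y U)
  have hinter : T = U := by
    simpa [insert_inter_of_notMem, hx, hy, inter_eq_left.2 hT, inter_eq_left.2 hU] using
      congrArg (· ∩ G) h
  have hsdiff : x = y := by
    simpa [insert_sdiff_of_notMem, hx, hy, sdiff_eq_empty_iff_subset.2 hT,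
      sdiff_eq_empty_iff_subset.2 hU] using congrArg (· \ G) h
  rw [hinter, hsdiff]

theorem choose_add_card_le_of_insert_mem (hG : powersetCard k G ⊆ E)
    (hR : ∀ p ∈ R, p.1 ∉ G ∧ p.2 ⊆ G ∧ insert p.1 p.2 ∈ E) :
    (#G).choose k + #R ≤ #E := by
  have hinj : Set.InjOn (fun p : α × Finset α ↦ insert p.1 p.2) R :=
    (insert_injOn_of_notMem_of_subset G).mono
      fun p hp ↦ show p.1 ∉ G ∧ p.2 ⊆ G from ⟨(hR p hp).1, (hR p hp).2.1⟩
  have hdisj : Disjoint (powersetCard k G) (R.image fun p ↦ insert p.1 p.2) := by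
    refine disjoint_left.2 fun A hA hAR ↦ ?_
    obtain ⟨p, hp, rfl⟩ := mem_image.1 hAR
    exact (hR p hp).1 ((mem_powersetCard.1 hA).1 (mem_insert_self _ _))
  rw [← card_powersetCard, ← card_image_of_injOn hinj, ← card_union_of_disjoint hdisj]
  exact card_le_card (union_subset hG (image_subset_iff.2 fun p hp ↦ (hR p hp).2.2))

theorem insert_sdiff_eq_singleton {x : α} {T : Finset α} (hx : x ∉ G) (hT : T ⊆ G) :
    insert x T \ G = {x} := by
  rw [insert_sdiff_of_notMem _ hx, sdiff_eq_empty_iff_subset.2 hT, insert_empty]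

theorem insert_mem_powersetCard_Icc {g n x : ℕ} {T : Finset ℕ} (hk : k ≠ 0)
    (hT : T ∈ powersetCard (k - 1) (Icc 1 g)) (hx : x ∈ Icc (g + 1) n) :
    insert x T ∈ powersetCard k (Icc 1 n) := by
  obtain ⟨hTg, hTk⟩ := mem_powersetCard.1 hT
  rw [mem_Icc] at hx
  have hxT : x ∉ T := fun h ↦ by
    have hxg := mem_Icc.1 (hTg h)
    omega
  refine mem_powersetCard.2 ⟨insert_subset (mem_Icc.2 (by omega))
    (hTg.trans (Icc_subset_Icc_right (by omega))), ?_⟩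
  rw [card_insert_of_notMem hxT, hTk, Nat.sub_one_add_one hk]

theorem notMem_Icc_of_mem_Icc {g n x : ℕ} (hx : x ∈ Icc (g + 1) n) : x ∉ Icc 1 g := fun h ↦ by
  rw [mem_Icc] at hx h
  omega

theorem le_card_E1 {n k s : ℕ} (hk : 2 ≤ k) (hs : s ≠ 0) :
    (k * s + k - 2).choose k + (n - (k * s + k - 2)) * (k * s + k - 2 - 1).choose (k - 2) ≤
      #(E1 n k s) := by
  have hks : k ≤ k * s := Nat.le_mul_of_pos_right k (Nat.pos_of_ne_zero hs)
  have hstar := degree_powersetCard (k := k - 1) (V := Icc 1 (k * s + k - 2)) (v := 1) (by omega)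
    (mem_Icc.2 (by omega))
  unfold E1
  rw [show k * s + k - 1 = k * s + k - 2 + 1 by omega]
  set g := k * s + k - 2
  set R := Icc (g + 1) n ×ˢ {T ∈ powersetCard (k - 1) (Icc 1 g) | 1 ∈ T}
  have hR : #R = (n - g) * (g - 1).choose (k - 2) := by
    rw [degree, Nat.card_Icc, Nat.add_sub_cancel] at hstar
    rw [card_product, Nat.card_Icc, Nat.add_sub_add_right, hstar]
    rfl
  calc g.choose k + (n - g) * (g - 1).choose (k - 2) = (#(Icc 1 g)).choose k + #R := by
        rw [hR, Nat.card_Icc, Nat.add_sub_cancel]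
    _ ≤ _ := choose_add_card_le_of_insert_mem subset_union_left fun p hp ↦ ?_
  obtain ⟨hx, hT⟩ := mem_product.1 hp
  obtain ⟨hT, h1T⟩ := mem_filter.1 hT
  have hxg := notMem_Icc_of_mem_Icc hx
  have hTg := (mem_powersetCard.1 hT).1
  refine ⟨hxg, hTg, mem_union_right _ ?_⟩
  simp only [mem_filter]
  exact ⟨insert_mem_powersetCard_Icc (by omega) hT hx, mem_insert_of_mem h1T,
    p.1, hx, insert_sdiff_eq_singleton hxg hTg⟩

theorem le_card_E0 {n k s : ℕ} (hk : 2 ≤ k) (hs : s ≠ 0) (hn : k * s + k ≤ n) :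
    (k * s + k - 2).choose k + ((k * s + k - 2).choose (k - 1) -
      (k * s + k - 2 - (k - 1)).choose (k - 1) + (n - (k * s + k - 2) - 1)) ≤ #(E0 n k s) := by
  have hks : k ≤ k * s := Nat.le_mul_of_pos_right k (Nat.pos_of_ne_zero hs)
  unfold E0
  rw [show k * s + k - 1 = k * s + k - 2 + 1 by omega,
    show Icc (k * s + k) n = Icc (k * s + k - 2 + 2) n by congr 1; omega]
  have hgn : k * s + k - 2 + 1 ≤ n := by omega
  have hkg : Icc 1 (k - 1) ⊆ Icc 1 (k * s + k - 2) := Icc_subset_Icc_right (by omega)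
  set g := k * s + k - 2
  set R₁ := {g + 1} ×ˢ {T ∈ powersetCard (k - 1) (Icc 1 g) | ¬Disjoint T (Icc 1 (k - 1))}
  set R₂ := Icc (g + 2) n ×ˢ {Icc 1 (k - 1)}
  have hR : #(R₁ ∪ R₂) =
      g.choose (k - 1) - (g - (k - 1)).choose (k - 1) + (n - g - 1) := by
    rw [card_union_of_disjoint (disjoint_product.2 (.inl (by simp))), card_product, card_product,
      card_filter_not_disjoint_powersetCard (k - 1) hkg, card_singleton, card_singleton, one_mul,
      mul_one, Nat.card_Icc, Nat.card_Icc, Nat.card_Icc, Nat.add_sub_cancel, Nat.add_sub_cancel]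
    omega
  calc _ = (#(Icc 1 g)).choose k + #(R₁ ∪ R₂) := by rw [hR, Nat.card_Icc, Nat.add_sub_cancel]
    _ ≤ _ := choose_add_card_le_of_insert_mem (subset_union_left.trans subset_union_left)
      fun p hp ↦ ?_
  obtain hp | hp := mem_union.1 hp <;> obtain ⟨hx, hT⟩ := mem_product.1 hp
  · obtain ⟨hT, hmeet⟩ := mem_filter.1 hT
    have hx' : p.1 ∈ Icc (g + 1) n := by rw [mem_singleton.1 hx, mem_Icc]; omega
    have hxg := notMem_Icc_of_mem_Icc hx'
    have hTg := (mem_powersetCard.1 hT).1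
    refine ⟨hxg, hTg, mem_union_left _ (mem_union_right _ (mem_filter.2
      ⟨insert_mem_powersetCard_Icc (by omega) hT hx', ?_, ?_⟩))⟩
    · rw [insert_sdiff_eq_singleton hxg hTg, mem_singleton.1 hx]
    · exact (not_disjoint_iff_nonempty_inter.1 hmeet).mono
        (inter_subset_inter_right (subset_insert _ _))
  · rw [mem_singleton.1 hT]
    have hx' : p.1 ∈ Icc (g + 1) n := Icc_subset_Icc_left (by omega) hx
    exact ⟨notMem_Icc_of_mem_Icc hx', hkg, mem_union_right _ (mem_image_of_mem _ hx)⟩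

end ExtremalFamilies

section Parameters

variable {k l m n : ℕ}

/-- The degree at or below which a vertex of a `k`-graph on `n` vertices counts as having low
degree: a small constant fraction of the largest possible degree. -/
def degreeThreshold (k n : ℕ) : ℕ :=
  (n - 1).choose (k - 1) / (8 * k) ^ k

/-- The reciprocal of the constant `β` for which stability of `k`-graphs is proved. -/
def stabilityConst (k : ℕ) : ℕ :=
  2 * (k + 1) * k ^ 2 * ((8 * k) ^ k) ^ 2

theorem stabilityConst_pos (hk : k ≠ 0) : 0 < stabilityConst k := by
  unfold stabilityConst
  positivity

theorem two_mul_degreeThreshold_lt (hk : k ≠ 0) (hkn : k ≤ n) :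
    2 * degreeThreshold k n < (n - 1).choose (k - 1) := by
  have hfull : 0 < (n - 1).choose (k - 1) := Nat.choose_pos (Nat.sub_le_sub_right hkn 1)
  have hpow : 2 < (8 * k) ^ k := lt_of_lt_of_le (by omega) (Nat.le_self_pow hk _)
  calc 2 * degreeThreshold k n ≤ 2 * ((n - 1).choose (k - 1) / 3) :=
        Nat.mul_le_mul_left 2 (Nat.div_le_div_left hpow three_pos)
    _ < (n - 1).choose (k - 1) := by omega

theorem two_mul_le_div_four_mul (hk : k ≠ 0) (hn : 8 * k ^ 2 ≤ n) : 2 * k ≤ n / (4 * k) :=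
  (Nat.le_div_iff_mul_le (by omega)).2 (le_trans (by ring_nf; rfl) hn)

theorem mul_degreeThreshold_le (hk : k ≠ 0) (hn : 8 * k ^ 2 ≤ n) :
    8 * k * degreeThreshold k n ≤ (n / (4 * k)).choose (k - 1) := by
  have hnq : n < 4 * k * (n / (4 * k) + 1) := Nat.lt_mul_div_succ n (by omega)
  have hkq := two_mul_le_div_four_mul hk hn
  set q := n / (4 * k)
  have hratio : (n - 1).choose (k - 1) ≤ (8 * k) ^ (k - 1) * q.choose (k - 1) := by
    refine choose_le_pow_mul_choose ?_
    calc n - 1 ≤ 4 * k * (q + 1) := (Nat.sub_le n 1).trans hnq.le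
      _ ≤ 4 * k * (2 * (q + 1 - (k - 1))) := Nat.mul_le_mul_left _ (by omega)
      _ = 8 * k * (q + 1 - (k - 1)) := by ring
  refine Nat.le_of_mul_le_mul_left ?_ (by positivity : 0 < (8 * k) ^ (k - 1))
  calc (8 * k) ^ (k - 1) * (8 * k * degreeThreshold k n)
      = degreeThreshold k n * (8 * k) ^ k := by rw [← mul_assoc, pow_sub_one_mul hk, mul_comm]
    _ ≤ (n - 1).choose (k - 1) := Nat.div_mul_le_self _ _
    _ ≤ (8 * k) ^ (k - 1) * q.choose (k - 1) := hratio

theorem mul_degreeThreshold_lt (hk : k ≠ 0) (hn : 8 * k ^ 2 ≤ n) :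
    k * degreeThreshold k n < (n / (4 * k)).choose (k - 1) := by
  have hle := mul_degreeThreshold_le hk hn
  have hkq := two_mul_le_div_four_mul hk hn
  have hpos : 0 < (n / (4 * k)).choose (k - 1) := Nat.choose_pos (by omega)
  rw [mul_assoc] at hle
  omega

theorem le_of_mul_degreeThreshold_le (hk : k ≠ 0)
    (hl : l * (degreeThreshold k n + 1) ≤ k * (m * (n - 1).choose (k - 1))) :
    l ≤ k * m * (8 * k) ^ k := by
  refine Nat.le_of_mul_le_mul_right (hl.trans ?_) (degreeThreshold k n).succ_pos
  calc k * (m * (n - 1).choose (k - 1))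
      ≤ k * (m * ((8 * k) ^ k * (degreeThreshold k n + 1))) := by
        gcongr
        exact (Nat.lt_mul_div_succ _ (by positivity)).le
    _ = k * m * (8 * k) ^ k * (degreeThreshold k n + 1) := by ring

theorem mul_choose_le_degreeThreshold (hk : 2 ≤ k) (hm : stabilityConst k * m ≤ n - 1)
    (hl : l ≤ k * m * (8 * k) ^ k) :
    (k + 1) * l * (n - 2).choose (k - 2) ≤ degreeThreshold k n := by
  rw [degreeThreshold, Nat.le_div_iff_mul_le (by positivity), mul_right_comm]
  refine mul_choose_sub_two_le hk ?_
  calc (k + 1) * l * (8 * k) ^ k * (k - 1)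
      ≤ (k + 1) * (k * m * (8 * k) ^ k) * (8 * k) ^ k * (2 * k) := by
        gcongr
        omega
    _ = stabilityConst k * m := by rw [stabilityConst]; ring
    _ ≤ n - 1 := hm

theorem two_mul_add_mul_le (hk : k ≠ 0) (hm : stabilityConst k * m ≤ n - 1)
    (hl : l ≤ k * m * (8 * k) ^ k) : 2 * k * (n / (4 * k)) + (k + 1) * l ≤ n := by
  have hq : 2 * (2 * k * (n / (4 * k))) ≤ n := le_trans (by ring_nf; rfl) (Nat.mul_div_le n (4 * k))
  have hl2 : 2 * ((k + 1) * l) ≤ n :=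
    calc 2 * ((k + 1) * l) ≤ 2 * ((k + 1) * (k * m * (8 * k) ^ k)) := by gcongr
      _ ≤ 2 * ((k + 1) * (k * m * (8 * k) ^ k)) * (k * (8 * k) ^ k) :=
          Nat.le_mul_of_pos_right _ (by positivity)
      _ = stabilityConst k * m := by rw [stabilityConst]; ring
      _ ≤ n := hm.trans (Nat.sub_le n 1)
  omega

end Parameters

section Stability

variable {α : Type*} [DecidableEq α] {F : Finset (Finset α)} {A B V : Finset α} {k s c d : ℕ}

theorem card_inter_le_of_card_verts_inter_le
    (hc : ∀ M, IsMatching {A ∈ F | ¬Disjoint A B} M → #(verts M ∩ B) ≤ c) (hA : A ∈ F) :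
    #(A ∩ B) ≤ c := by
  by_cases hAB : Disjoint A B
  · simp [disjoint_iff_inter_eq_empty.1 hAB]
  · simpa only [verts_singleton] using hc {A} (.singleton (mem_filter.2 ⟨hA, hAB⟩))

theorem intersecting_of_card_verts_inter_le_one
    (hc : ∀ M, IsMatching {A ∈ F | ¬Disjoint A B} M → #(verts M ∩ B) ≤ 1) :
    ({A ∈ F | ¬Disjoint A B} : Set (Finset α)).Intersecting := by
  rw [← coe_filter]
  exact intersecting_of_isMatching_card_le_one
    (fun h ↦ (mem_filter.1 h).2 (disjoint_empty_left B))
    fun M hM ↦ hM.card_le_card_verts_inter.trans (hc M hM)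

theorem card_deficientVerts_le (hk : k ≠ 0) (hF : F ⊆ powersetCard k V) {g : ℕ} (hg : g ≤ #V)
    (hcard : g.choose k ≤ #F) :
    #(deficientVerts k V F (degreeThreshold k #V)) ≤ k * (#V - g) * (8 * k) ^ k := by
  refine le_of_mul_degreeThreshold_le hk ((card_deficientVerts_mul_le hF).trans ?_)
  gcongr
  have hchoose := choose_succ_le_add_mul_choose g (k - 1) (#V - g)
  rw [Nat.sub_one_add_one hk, Nat.add_sub_cancel' hg] at hchoose
  omega

-- `c` is how many vertices of `B` fit together with `V \ B` into `k * s + k - 1` vertices.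
theorem exists_card_verts_inter_lowDegreeVerts_le (hk : 2 ≤ k) (hF : F ⊆ powersetCard k V)
    (hs : ∀ M, IsMatching F M → #M ≤ s) (hn : 8 * k ^ 2 ≤ #V) (hsn : k * s + k ≤ #V)
    (hm : stabilityConst k * (#V - (k * s + k - 2)) ≤ #V - 1)
    (hcard : (k * s + k - 2).choose k ≤ #F) (hB : B = lowDegreeVerts V F (degreeThreshold k #V)) :
    ∃ c, #V + c = #B + (k * s + k - 1) ∧
      ∀ M, IsMatching {A ∈ F | ¬Disjoint A B} M → #(verts M ∩ B) ≤ c := by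
  subst hB
  set B := lowDegreeVerts V F (degreeThreshold k #V)
  have hk0 : k ≠ 0 := by omega
  have hL := card_deficientVerts_le hk0 hF (by omega) hcard
  have hcover (M) (hM : IsMatching {A ∈ F | ¬Disjoint A B} M) :
      #V + #(verts M ∩ B) < #B + k * s + k :=
    hM.card_add_card_verts_inter_lowDegreeVerts_lt hk0 hF hs
      (two_mul_degreeThreshold_lt hk0 (by omega)) (mul_degreeThreshold_lt hk0 hn)
      (mul_choose_le_degreeThreshold hk hm hL) (two_mul_add_mul_le hk0 hm hL)
  have hempty : #V + 0 < #B + k * s + k := by simpa using hcover ∅ (.empty _)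
  refine ⟨#B + (k * s + k - 1) - #V, by omega, fun M hM ↦ ?_⟩
  have hlt := hcover M hM
  omega

theorem card_le_choose_of_card_verts_inter_lowDegreeVerts_le (hk : 2 ≤ k)
    (hF : F ⊆ powersetCard k V) (hn : 8 * k ^ 2 ≤ #V) {g : ℕ} (hg : g ≤ #V)
    (hm : stabilityConst k * (#V - g) ≤ #V - 1) (hcard : g.choose k ≤ #F)
    (hB : B = lowDegreeVerts V F (degreeThreshold k #V)) (hd : d ≠ 0) (hdB : #V + d = #B + g)
    (hc : ∀ M, IsMatching {A ∈ F | ¬Disjoint A B} M → #(verts M ∩ B) ≤ d + 1) :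
    #F ≤ g.choose k := by
  have hk0 : k ≠ 0 := by omega
  have hL := card_deficientVerts_le hk0 hF hg hcard
  have hdef := mul_choose_le_degreeThreshold hk hm hL
  have hqV := two_mul_add_mul_le hk0 hm hL
  have hkn : k ≤ #V := by nlinarith
  have hBL := card_le_card
    (lowDegreeVerts_subset_deficientVerts hk0 hF (two_mul_degreeThreshold_lt hk0 hkn))
  rw [← hB] at hBL
  have hVB : #(V \ B) + #B = #V :=
    card_sdiff_add_card_eq_card (hB ▸ lowDegreeVerts_subset)
  have hqB : #V / (4 * k) ≤ #(V \ B) := by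
    have hq := Nat.le_mul_of_pos_left (#V / (4 * k)) (show 0 < 2 * k by omega)
    have hl := Nat.le_mul_of_pos_left #(deficientVerts k V F (degreeThreshold k #V))
      (show 0 < k + 1 by omega)
    omega
  rw [show g = #(V \ B) + d by omega]
  refine card_le_choose_add_of_card_verts_inter_le hk0 hd hF
    (fun v hv ↦ degree_le_of_mem_lowDegreeVerts (hB ▸ hv)) (le_trans ?_ hdef) ?_ hc
  · gcongr
    omega
  · calc 4 * degreeThreshold k #V ≤ 8 * k * degreeThreshold k #V :=
          Nat.mul_le_mul_right _ (by omega)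
      _ ≤ (#V / (4 * k)).choose (k - 1) := mul_degreeThreshold_le hk0 hn
      _ ≤ (#(V \ B)).choose (k - 1) := Nat.choose_le_choose _ hqB

end Stability

theorem exists_subset_card_eq_of_lt_card {α : Type*} {F : Finset (Finset α)} {V : Finset α}
    {k s : ℕ} (hk : 3 ≤ k) (hF : F ⊆ powersetCard k V)
    (hs : ∀ M, IsMatching F M → #M ≤ s) (hks : 8 * k ^ 3 < s) (hsn : k * s + k ≤ #V)
    (hm : stabilityConst k * (#V - (k * s + k - 2)) ≤ #V - 1)
    (hcard₀ : (k * s + k - 2).choose k + ((k * s + k - 2).choose (k - 1) -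
      (k * s + k - 2 - (k - 1)).choose (k - 1) + (#V - (k * s + k - 2) - 1)) < #F)
    (hcard₁ : (k * s + k - 2).choose k +
      (#V - (k * s + k - 2)) * (k * s + k - 2 - 1).choose (k - 2) < #F) :
    ∃ W ⊆ V, #W = k * s + k - 1 ∧ ∀ A ∈ F, A ⊆ W := by
  classical
  have hsks : s ≤ k * s := Nat.le_mul_of_pos_left s (by omega)
  have hk23 : 8 * k ^ 2 ≤ 8 * k ^ 3 := by gcongr <;> omega
  have hn : 8 * k ^ 2 ≤ #V := by omega
  obtain ⟨B, hB⟩ : ∃ B, B = lowDegreeVerts V F (degreeThreshold k #V) := ⟨_, rfl⟩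
  have hBV : B ⊆ V := hB ▸ lowDegreeVerts_subset
  have hVB : #(V \ B) + #B = #V := card_sdiff_add_card_eq_card hBV
  obtain ⟨c, hc, hcB⟩ :=
    exists_card_verts_inter_lowDegreeVerts_le (by omega) hF hs hn hsn hm (by omega) hB
  have hc1 : c < 2 := by
    by_contra! hc2
    obtain ⟨d, rfl⟩ := Nat.exists_eq_add_of_le' (show 1 ≤ c by omega)
    have hle := card_le_choose_of_card_verts_inter_lowDegreeVerts_le (g := k * s + k - 2)
      (by omega) hF hn (by omega) hm (by omega) hB (by omega) (by omega) hcB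
    omega
  interval_cases c
  · refine ⟨V \ B, sdiff_subset, by omega, fun A hA ↦
      subset_sdiff.2 ⟨(mem_powersetCard.1 (hF hA)).1, ?_⟩⟩
    exact disjoint_iff_inter_eq_empty.2
      (card_eq_zero.1 (Nat.le_zero.1 (card_inter_le_of_card_verts_inter_le hcB hA)))
  · have hg : #(V \ B) = k * s + k - 2 := by omega
    have hlarge : 4 * (k - 1) ^ 2 * (k - 2) < #(V \ B) :=
      calc 4 * (k - 1) ^ 2 * (k - 2) ≤ 8 * k ^ 2 * k := by gcongr <;> omega
        _ = 8 * k ^ 3 := by ring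
        _ < #(V \ B) := by omega
    obtain ⟨W, hWV, hW, hFW⟩ | hle := exists_subset_insert_or_card_le hk hF hBV (by omega) hlarge
      (fun A ↦ card_inter_le_of_card_verts_inter_le hcB)
      (intersecting_of_card_verts_inter_le_one hcB)
    · exact ⟨W, hWV, by omega, hFW⟩
    · rw [hg, show #B = #V - (k * s + k - 2) by omega, ← max_add_add_left] at hle
      exact absurd hle (max_lt hcard₀ hcard₁).not_ge

theorem IsMatching.card_le_matchingNumber {F M : Finset (Finset ℕ)} (hM : IsMatching F M) :
    #M ≤ matchingNumber F :=
  le_csSup ⟨#F, by rintro _ ⟨N, hN, rfl, -⟩; exact card_le_card hN⟩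
    ⟨M, hM.subset, rfl, hM.pairwiseDisjoint⟩

theorem mul_sub_le_of_le_one_add_inv_mul {n a b K : ℕ} (hK : 0 < K) (hb : 2 ≤ b) (hn : a + b ≤ n)
    (h : (n : ℝ) ≤ (1 + (K : ℝ)⁻¹) * a + b - 2) : K * (n - (a + b - 2)) ≤ a := by
  have hK' : (0 : ℝ) < K := Nat.cast_pos.2 hK
  have hcast : ((n - (a + b - 2) : ℕ) : ℝ) = n - (a + b - 2) := by
    push_cast [show a + b - 2 ≤ n by omega, show 2 ≤ a + b by omega]
    ring
  have hreal : (K : ℝ) * ((n - (a + b - 2) : ℕ) : ℝ) ≤ a := by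
    rw [hcast, mul_comm, ← le_div_iff₀ hK', div_eq_inv_mul]
    linarith
  exact_mod_cast hreal

/-- stability; a dense family is contained in a clique of size `ks+k-1`. -/
theorem stmt2 (k : ℕ) (hk : 3 ≤ k) :
    ∃ (β : ℝ) (s₀ : ℕ), 0 < β ∧ 0 < s₀ ∧
      ∀ (n s : ℕ), s₀ < s → k * s + k ≤ n → (n : ℝ) ≤ (1 + β) * (k * s) + k - 2 →
        ∀ F ⊆ Finset.powersetCard k (Finset.Icc 1 n),
          matchingNumber F ≤ s →
          max (E0 n k s).card (E1 n k s).card < F.card →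
            ∃ W ⊆ Finset.Icc 1 n, W.card = k * s + k - 1 ∧ ∀ A ∈ F, A ⊆ W := by
  have hK : 0 < stabilityConst k := stabilityConst_pos (by omega)
  refine ⟨(stabilityConst k : ℝ)⁻¹, 8 * k ^ 3, by positivity, by positivity, ?_⟩
  intro n s hs hsn hnβ F hF hν hcard
  obtain ⟨hcard₀, hcard₁⟩ := max_lt_iff.1 hcard
  have hm : stabilityConst k * (n - (k * s + k - 2)) ≤ k * s :=
    mul_sub_le_of_le_one_add_inv_mul hK (by omega) hsn (by exact_mod_cast hnβ)
  have hn : #(Icc 1 n) = n := by simp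
  refine exists_subset_card_eq_of_lt_card hk hF (fun M hM ↦ hM.card_le_matchingNumber.trans hν) hs
    ?_ ?_ ?_ ?_ <;> rw [hn]
  · exact hsn
  · omega
  · exact (le_card_E0 (by omega) (by omega) hsn).trans_lt hcard₀
  · exact (le_card_E1 (by omega) (by omega)).trans_lt hcard₁
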